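/- For i = 0,1 and all τ in the upper half-plane H₁, the raising operator applied to the weight −5/2 forms h̃ᵢ satisfies D_τ h̃ᵢ(τ) = (5/12)·Ê₂(τ)·h̃ᵢ(τ) − (1/24)·hᵢ(τ), where Ê₂ is the almost holomorphic Eisenstein series of weight 2 and h₀, h₁ are the theta coefficients of the K3 elliptic genus. -/

import Mathlib

/-!
STATEMENT 3: For i = 0,1 the raising operator at weight −5/2 satisfies
D_τ h̃ᵢ(τ) = (5/12)·Ê₂(τ)·h̃ᵢ(τ) − (1/24)·hᵢ(τ), where Ê₂ = E₂ − 3/(πτ₂).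
-/

noncomputable section
open Complex Real

namespace KZ

def theta2 (τ z : ℂ) : ℂ :=
  ∑' n : ℤ, Complex.exp (π * I * (n + 1/2)^2 * τ + 2 * π * I * (n + 1/2) * z)

def theta3 (τ z : ℂ) : ℂ :=
  ∑' n : ℤ, Complex.exp (π * I * (n:ℂ)^2 * τ + 2 * π * I * n * z)

def theta4 (τ : ℂ) : ℂ :=
  ∑' n : ℤ, (-1:ℂ)^n * Complex.exp (π * I * (n:ℂ)^2 * τ)

def eta (τ : ℂ) : ℂ :=
  Complex.exp (π * I * τ / 12) * ∏' n : ℕ, (1 - Complex.exp (2 * π * I * (n + 1) * τ))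

/-- h̃₀(τ) = θ₂(2τ)/η(τ)⁶. -/
def htilde0 (τ : ℂ) : ℂ := theta2 (2*τ) 0 / (eta τ)^6

/-- h̃₁(τ) = −θ₃(2τ)/η(τ)⁶. -/
def htilde1 (τ : ℂ) : ℂ := - theta3 (2*τ) 0 / (eta τ)^6

/-- h₀(τ) = 24θ₃(2τ)/θ₃(τ)² − 2((θ₄⁴−θ₂⁴)/η⁶)θ₂(2τ). -/
def h0 (τ : ℂ) : ℂ :=
  24 * theta3 (2*τ) 0 / (theta3 τ 0)^2
    - 2 * (((theta4 τ)^4 - (theta2 τ 0)^4) / (eta τ)^6) * theta2 (2*τ) 0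

/-- h₁(τ) = 24θ₂(2τ)/θ₃(τ)² + 2((θ₄⁴−θ₂⁴)/η⁶)θ₃(2τ). -/
def h1 (τ : ℂ) : ℂ :=
  24 * theta2 (2*τ) 0 / (theta3 τ 0)^2
    + 2 * (((theta4 τ)^4 - (theta2 τ 0)^4) / (eta τ)^6) * theta3 (2*τ) 0

/-- The holomorphic Eisenstein series E₂(τ) = 1 − 24 Σ_{n≥1} σ₁(n) qⁿ. -/
def E2 (τ : ℂ) : ℂ :=
  1 - 24 * ∑' n : ℕ, ((ArithmeticFunction.sigma 1) (n+1) : ℂ)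
    * Complex.exp (2 * π * I * τ) ^ (n+1)

/-- The almost holomorphic Eisenstein series Ê₂(τ) = E₂(τ) − 3/(πτ₂). -/
def E2hat (τ : ℂ) : ℂ := E2 τ - 3 / (π * τ.im)

/-- The raising operator at weight −5/2 on holomorphic functions:
D_τ f = (i/π)(∂_τ f + (5i/(4τ₂)) f). -/
def Dtau (f : ℂ → ℂ) (τ : ℂ) : ℂ :=
  (I / π) * (deriv f τ + (5 * I / (4 * τ.im)) * f τ)

/-!
Write `E = θ₃(2τ)`, `O = θ₂(2τ)` and `∂ = d/dτ`. Under `τ ↦ -1/τ` the pair `(E, O)` is sent to a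
multiple of `(E + O, E - O)`, so both `EO(E⁴ - O⁴)` and the Wronskian `E ∂O - O ∂E` transform like
`η⁶`. Divided by `η⁶` they become modular forms of weight zero for `SL₂(ℤ)`, hence constants.
Differentiating the first identity gives, together with the second, a linear system for `∂E` and
`∂O`, with solution `∂E = (πi/12)(E₂ + 5O⁴ - E⁴)E` and `∂O = (πi/12)(E₂ + 5E⁴ - O⁴)O`. Since `θ₂²`,
`θ₃²` and `θ₄²` are quadratic in `E` and `O`, and the first identity turns `1/θ₃²` into a polynomial
in `E` and `O` over `η⁶`, the terms without `E₂` are multiples of the `hᵢ`.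
-/

open Filter Function
open UpperHalfPlane hiding I
open scoped Manifold MatrixGroups ModularForm Topology

local notation "𝕢" => Periodic.qParam

section ModularGroup

lemma ne_zero_of_im_pos {τ : ℂ} (hτ : 0 < τ.im) : τ ≠ 0 :=
  UpperHalfPlane.ne_zero ⟨τ, hτ⟩

lemma im_neg_one_div_pos {τ : ℂ} (hτ : 0 < τ.im) : 0 < (-1 / τ).im := by
  simpa [neg_div, inv_neg] using (⟨τ, hτ⟩ : ℍ).im_inv_neg_coe_pos

lemma eventually_im_pos {τ : ℂ} (hτ : 0 < τ.im) : ∀ᶠ t in 𝓝 τ, 0 < t.im :=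
  isOpen_upperHalfPlaneSet.mem_nhds hτ

lemma slash_zero_eq_self {f : ℍ → ℂ} (hS : ∀ z, f (ModularGroup.S • z) = f z)
    (hT : ∀ z, f (ModularGroup.T • z) = f z) (γ : SL(2, ℤ)) : f ∣[(0 : ℤ)] γ = f := by
  refine SlashInvariantForm.slash_action_generators_SL2Z ?_ ?_ γ <;> ext z
  · rw [ModularForm.SL_slash_apply, hS, neg_zero, zpow_zero, mul_one]
  · rw [ModularForm.SL_slash_apply, hT, neg_zero, zpow_zero, mul_one]

lemma exists_eq_const_of_modular {f : ℍ → ℂ} (hf : MDiff f)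
    (hS : ∀ z, f (ModularGroup.S • z) = f z) (hT : ∀ z, f (ModularGroup.T • z) = f z)
    (hbdd : IsBoundedAtImInfty f) : ∃ c, f = const ℍ c :=
  ModularFormClass.levelOne_weight_zero_const (F := ModularForm 𝒮ℒ 0)
    { toFun := f
      slash_action_eq' := by
        rintro _ ⟨γ, rfl⟩
        exact slash_zero_eq_self hS hT γ
      holo' := hf
      bdd_at_cusps' := by
        intro c hc
        rw [Subgroup.IsArithmetic.isCusp_iff_isCusp_SL2Z] at hc
        rw [OnePoint.isBoundedAt_iff_forall_SL2Z hc]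
        intro γ _
        rwa [slash_zero_eq_self hS hT] }

lemma qParam_mem_ball {h : ℝ} (hh : 0 < h) {τ : ℂ} (hτ : 0 < τ.im) :
    𝕢 h τ ∈ Metric.ball (0 : ℂ) 1 := by
  simpa using Periodic.norm_qParam_lt_one hh hτ

lemma qParam_one_one_add (τ : ℂ) : 𝕢 1 (1 + τ) = 𝕢 1 τ := by
  simp [Periodic.qParam, mul_add, Complex.exp_add]

/-- Invariance under `τ ↦ τ + 1` and boundedness at `i∞` are automatic for a function of `q`. -/
lemma apply_qParam_eq_apply_zero {F : ℂ → ℂ} (hF : DifferentiableOn ℂ F (Metric.ball 0 1))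
    (hS : ∀ τ : ℂ, 0 < τ.im → F (𝕢 1 (-1 / τ)) = F (𝕢 1 τ)) {τ : ℂ} (hτ : 0 < τ.im) :
    F (𝕢 1 τ) = F 0 := by
  let f : ℍ → ℂ := fun z ↦ F (𝕢 1 z)
  have f_tendsto : Tendsto f atImInfty (𝓝 (F 0)) :=
    (hF.differentiableAt (Metric.ball_mem_nhds 0 one_pos)).continuousAt.tendsto.comp
      (qParam_tendsto_atImInfty one_pos)
  have f_mdiff : MDiff f := by
    have hFq : DifferentiableOn ℂ (fun z ↦ F (𝕢 1 z)) {z | 0 < z.im} :=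
      hF.comp Periodic.differentiable_qParam.differentiableOn fun z hz ↦
        qParam_mem_ball one_pos hz
    refine mdifferentiable_iff.mpr (hFq.congr fun z hz ↦ ?_)
    simp [f, ofComplex_apply_of_im_pos hz]
  have f_S (z : ℍ) : f (ModularGroup.S • z) = f z := by
    simp only [f, modular_S_smul]
    simpa [neg_div, inv_neg] using hS z z.2
  have f_T (z : ℍ) : f (ModularGroup.T • z) = f z := by
    simp only [f, modular_T_smul, coe_vadd, ofReal_one, qParam_one_one_add]
  obtain ⟨c, hc⟩ := exists_eq_const_of_modular f_mdiff f_S f_T (f_tendsto.isBigO_one ℝ)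
  rw [hc] at f_tendsto
  exact (congrFun hc ⟨τ, hτ⟩).trans (tendsto_nhds_unique tendsto_const_nhds f_tendsto)

end ModularGroup

section Eta

lemma eta_eq_modularForm_eta : eta = ModularForm.eta := by
  ext τ
  simp only [eta, ModularForm.eta, Periodic.qParam, ModularForm.eta_q_eq_cexp]
  congr 2
  push_cast
  ring

lemma eta_ne_zero {τ : ℂ} (hτ : 0 < τ.im) : eta τ ≠ 0 := by
  rw [eta_eq_modularForm_eta]
  exact ModularForm.eta_ne_zero hτ

lemma E2_eq_eisensteinSeries_E2 {τ : ℂ} (hτ : 0 < τ.im) :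
    E2 τ = EisensteinSeries.E2 ⟨τ, hτ⟩ := by
  rw [EisensteinSeries.E2_eq_tsum_cexp, E2]
  congr 2
  rw [tsum_pnat_eq_tsum_succ
    (f := fun n ↦ (ArithmeticFunction.sigma 1 n : ℂ) * cexp (2 * π * I * τ) ^ n)]

lemma hasDerivAt_eta {τ : ℂ} (hτ : 0 < τ.im) : HasDerivAt eta (π * I / 12 * E2 τ * eta τ) τ := by
  have hlog := ModularForm.logDeriv_eta_eq_E2 ⟨τ, hτ⟩
  rw [← E2_eq_eisensteinSeries_E2, logDeriv_apply, ← eta_eq_modularForm_eta,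
    div_eq_iff (eta_ne_zero hτ)] at hlog
  have hd := ModularForm.differentiableAt_eta_of_mem_upperHalfPlaneSet hτ
  rw [← eta_eq_modularForm_eta] at hd
  exact hlog ▸ hd.hasDerivAt

lemma eta_neg_one_div_pow_six {τ : ℂ} (hτ : 0 < τ.im) :
    eta (-1 / τ) ^ 6 = I * τ ^ 3 * eta τ ^ 6 := by
  have sqrt_pow_six (z : ℂ) : Complex.sqrt z ^ 6 = z ^ 3 := by
    rw [pow_mul (Complex.sqrt z) 2 3, Complex.sqrt, ← Complex.cpow_nat_mul]
    simp
  have h := ModularForm.eta_comp_eq_csqrt_I_inv (x := τ) hτ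
  simp only [comp_apply, Pi.smul_apply, Pi.mul_apply, smul_eq_mul] at h
  rw [eta_eq_modularForm_eta, h, mul_pow, mul_pow, inv_pow, sqrt_pow_six, sqrt_pow_six,
    I_pow_three, inv_neg, inv_I, neg_neg, mul_assoc]

/-- Euler's product `∏ (1 - qⁿ)` over `n ≥ 1`. -/
def eulerProduct (q : ℂ) : ℂ := ∏' n : ℕ, (1 - q ^ (n + 1))

lemma eulerProduct_zero : eulerProduct 0 = 1 := by simp [eulerProduct]

lemma eulerProduct_ne_zero {q : ℂ} (hq : q ∈ Metric.ball (0 : ℂ) 1) : eulerProduct q ≠ 0 := by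
  have hq' : ‖q‖ < 1 := by simpa using hq
  refine tprod_one_add_ne_zero_of_summable (f := fun n : ℕ ↦ -q ^ (n + 1)) (fun n h ↦ ?_) ?_
  · have hpow : ‖q‖ ^ (n + 1) = 1 := by
      rw [← norm_pow, show q ^ (n + 1) = 1 by linear_combination -h, norm_one]
    exact (pow_lt_one₀ (norm_nonneg q) hq' n.succ_ne_zero).ne hpow
  · simpa using (summable_nat_add_iff 1).mpr (summable_geometric_of_lt_one (norm_nonneg _) hq')

lemma eta_eq_qParam_mul_eulerProduct (τ : ℂ) : eta τ = 𝕢 24 τ * eulerProduct (𝕢 1 τ) := by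
  rw [eta_eq_modularForm_eta]
  rfl

/-- A form with the multiplier system of `ηⁿ` is determined by its leading coefficient, because
its quotient by the nowhere vanishing `ηⁿ` is a level one form of weight zero. -/
lemma eq_const_mul_eta_pow {n : ℕ} {f g : ℂ → ℂ}
    (hg : DifferentiableOn ℂ g (Metric.ball 0 1))
    (hfg : ∀ τ : ℂ, 0 < τ.im → f τ = 𝕢 24 τ ^ n * g (𝕢 1 τ))
    (hS : ∀ τ : ℂ, 0 < τ.im → f (-1 / τ) * eta τ ^ n = f τ * eta (-1 / τ) ^ n)
    {τ : ℂ} (hτ : 0 < τ.im) : f τ = g 0 * eta τ ^ n := by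
  have div_eta (t : ℂ) (ht : 0 < t.im) :
      g (𝕢 1 t) / eulerProduct (𝕢 1 t) ^ n = f t / eta t ^ n := by
    rw [hfg t ht, eta_eq_qParam_mul_eulerProduct, mul_pow,
      mul_div_mul_left _ _ (pow_ne_zero n (Periodic.qParam_ne_zero t))]
  have hdiff : DifferentiableOn ℂ (fun q ↦ g q / eulerProduct q ^ n) (Metric.ball 0 1) :=
    hg.div (ModularForm.differentiableOn_tprod_one_sub_pow.pow n)
      fun q hq ↦ pow_ne_zero n (eulerProduct_ne_zero hq)
  have hconst := apply_qParam_eq_apply_zero hdiff (fun t ht ↦ ?_) hτ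
  · rwa [div_eta τ hτ, eulerProduct_zero, one_pow, div_one,
      div_eq_iff (pow_ne_zero n (eta_ne_zero hτ))] at hconst
  · have ht' := im_neg_one_div_pos ht
    rw [div_eta t ht, div_eta _ ht', div_eq_div_iff (pow_ne_zero n (eta_ne_zero ht'))
      (pow_ne_zero n (eta_ne_zero ht)), hS t ht]

end Eta

section Theta

lemma theta3_eq_jacobiTheta₂ (τ z : ℂ) : theta3 τ z = jacobiTheta₂ z τ := by
  simp only [theta3, jacobiTheta₂, jacobiTheta₂_term, add_comm]

lemma theta4_eq_theta3 (τ : ℂ) : theta4 τ = theta3 τ (1 / 2) := by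
  refine tsum_congr fun n ↦ ?_
  rw [← exp_pi_mul_I, ← exp_int_mul, ← Complex.exp_add]
  ring_nf

lemma theta2_eq_exp_mul_theta3 (τ z : ℂ) :
    theta2 τ z = cexp (π * I * τ / 4 + π * I * z) * theta3 τ (z + τ / 2) := by
  rw [theta2, theta3, ← tsum_mul_left]
  refine tsum_congr fun n ↦ ?_
  rw [← Complex.exp_add]
  ring_nf

lemma theta3_add_one (τ z : ℂ) : theta3 τ (z + 1) = theta3 τ z := by
  simp only [theta3_eq_jacobiTheta₂, jacobiTheta₂_add_left]

lemma theta2_add_one (τ z : ℂ) : theta2 τ (z + 1) = -theta2 τ z := by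
  rw [theta2_eq_exp_mul_theta3, theta2_eq_exp_mul_theta3, add_right_comm, theta3_add_one,
    mul_add (π * I : ℂ), ← add_assoc, mul_one, Complex.exp_add, exp_pi_mul_I]
  ring

lemma theta2_add_half_period (τ z : ℂ) :
    theta2 τ (z + τ / 2) = cexp (-(π * I * τ / 4 + π * I * z)) * theta3 τ z := by
  rw [theta2_eq_exp_mul_theta3, add_assoc, add_halves, theta3_eq_jacobiTheta₂,
    jacobiTheta₂_add_left', ← theta3_eq_jacobiTheta₂, ← mul_assoc, ← Complex.exp_add]
  ring_nf

lemma hasSum_theta3 {τ : ℂ} (hτ : 0 < τ.im) (z : ℂ) :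
    HasSum (fun n : ℤ ↦ cexp (π * I * (n : ℂ) ^ 2 * τ + 2 * π * I * n * z)) (theta3 τ z) := by
  simpa only [jacobiTheta₂_term, add_comm, ← theta3_eq_jacobiTheta₂]
    using hasSum_jacobiTheta₂_term z hτ

lemma hasSum_theta2 {τ : ℂ} (hτ : 0 < τ.im) (z : ℂ) :
    HasSum (fun n : ℤ ↦ cexp (π * I * (n + 1 / 2) ^ 2 * τ + 2 * π * I * (n + 1 / 2) * z))
      (theta2 τ z) := by
  rw [theta2_eq_exp_mul_theta3]
  refine ((hasSum_theta3 hτ _).mul_left _).congr_fun fun n ↦ ?_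
  rw [← Complex.exp_add]
  ring_nf

lemma bijective_sumElim_two_mul :
    Bijective (Sum.elim (fun n : ℤ ↦ 2 * n) fun n ↦ 2 * n + 1) := by
  constructor
  · rintro (a | a) (b | b) h <;> simp only [Sum.elim_inl, Sum.elim_inr] at h <;> grind
  · intro n
    obtain ⟨k, rfl | rfl⟩ := Int.even_or_odd' n
    · exact ⟨.inl k, rfl⟩
    · exact ⟨.inr k, rfl⟩

lemma bijective_sumElim_add_sub :
    Bijective (Sum.elim (fun p : ℤ × ℤ ↦ (p.1 + p.2, p.1 - p.2))
      fun p : ℤ × ℤ ↦ (p.1 + p.2 + 1, p.1 - p.2)) := by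
  constructor
  · rintro (⟨a, b⟩ | ⟨a, b⟩) (⟨c, d⟩ | ⟨c, d⟩) h <;>
      simp only [Sum.elim_inl, Sum.elim_inr, Prod.mk.injEq] at h <;> grind
  · rintro ⟨m, n⟩
    obtain ⟨k, h | h⟩ := Int.even_or_odd' (m + n)
    · exact ⟨.inl (k, m - k), by simp; omega⟩
    · exact ⟨.inr (k, m - k - 1), by simp; omega⟩

lemma eq_add_of_bijective_sumElim {ι ι' κ : Type*} {i : ι → κ} {j : ι' → κ}
    (hij : Bijective (Sum.elim i j)) {f : κ → ℂ} {a b c : ℂ} (hf : HasSum f c)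
    (ha : HasSum (f ∘ i) a) (hb : HasSum (f ∘ j) b) : c = a + b :=
  ((Equiv.ofBijective _ hij).hasSum_iff.mpr hf).unique (HasSum.sum ha hb)

lemma theta3_eq_theta3_add_theta2 {τ : ℂ} (hτ : 0 < τ.im) (z : ℂ) :
    theta3 τ z = theta3 (4 * τ) (2 * z) + theta2 (4 * τ) (2 * z) := by
  have h4τ : 0 < (4 * τ).im := by simpa using hτ
  refine eq_add_of_bijective_sumElim bijective_sumElim_two_mul (hasSum_theta3 hτ z)
    ((hasSum_theta3 h4τ _).congr_fun fun n ↦ ?_) ((hasSum_theta2 h4τ _).congr_fun fun n ↦ ?_) <;>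
  · simp only [comp_apply]
    push_cast
    ring_nf

lemma theta3_mul_theta3 {τ : ℂ} (hτ : 0 < τ.im) (z w : ℂ) :
    theta3 τ z * theta3 τ w = theta3 (2 * τ) (z + w) * theta3 (2 * τ) (z - w) +
      theta2 (2 * τ) (z + w) * theta2 (2 * τ) (z - w) := by
  have h2τ : 0 < (2 * τ).im := by simpa using hτ
  have hasSum_mul {f g : ℤ → ℂ} {a b : ℂ} (hf : HasSum f a) (hg : HasSum g b) :
      HasSum (fun p : ℤ × ℤ ↦ f p.1 * g p.2) (a * b) :=
    hf.mul hg (summable_mul_of_summable_norm hf.summable.norm hg.summable.norm)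
  refine eq_add_of_bijective_sumElim bijective_sumElim_add_sub
    (hasSum_mul (hasSum_theta3 hτ z) (hasSum_theta3 hτ w))
    ((hasSum_mul (hasSum_theta3 h2τ _) (hasSum_theta3 h2τ _)).congr_fun fun p ↦ ?_)
    ((hasSum_mul (hasSum_theta2 h2τ _) (hasSum_theta2 h2τ _)).congr_fun fun p ↦ ?_) <;>
  · simp only [comp_apply, ← Complex.exp_add]
    push_cast
    ring_nf

end Theta

section ThetaConstants

/-- The theta constant `θ₃(2τ) = ∑ q^(r²/4)` over even `r`, the first of the two theta constants
of index one. -/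
def thetaEven (τ : ℂ) : ℂ := theta3 (2 * τ) 0

/-- The theta constant `θ₂(2τ) = ∑ q^(r²/4)` over odd `r`, the second of the two theta constants
of index one. -/
def thetaOdd (τ : ℂ) : ℂ := theta2 (2 * τ) 0

lemma theta3_zero_sq {τ : ℂ} (hτ : 0 < τ.im) :
    theta3 τ 0 ^ 2 = thetaEven τ ^ 2 + thetaOdd τ ^ 2 := by
  simpa only [thetaEven, thetaOdd, add_zero, sub_zero, ← sq] using theta3_mul_theta3 hτ 0 0

lemma theta4_sq {τ : ℂ} (hτ : 0 < τ.im) :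
    theta4 τ ^ 2 = thetaEven τ ^ 2 - thetaOdd τ ^ 2 := by
  rw [theta4_eq_theta3, sq, theta3_mul_theta3 hτ, add_halves, sub_self, ← zero_add (1 : ℂ),
    theta3_add_one, theta2_add_one, thetaEven, thetaOdd]
  ring

lemma theta2_zero_sq {τ : ℂ} (hτ : 0 < τ.im) :
    theta2 τ 0 ^ 2 = 2 * (thetaEven τ * thetaOdd τ) := by
  have hO : thetaOdd τ = cexp (π * I * τ / 2) * theta3 (2 * τ) τ := by
    rw [thetaOdd, theta2_eq_exp_mul_theta3]
    ring_nf
  have hE : thetaEven τ = cexp (π * I * τ / 2) * theta2 (2 * τ) τ := by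
    have h := theta2_add_half_period (2 * τ) 0
    rw [zero_add, mul_div_cancel_left₀ τ two_ne_zero] at h
    rw [h, ← mul_assoc, ← Complex.exp_add, thetaEven,
      show π * I * τ / 2 + -(π * I * (2 * τ) / 4 + π * I * 0) = 0 by ring, Complex.exp_zero,
      one_mul]
  calc theta2 τ 0 ^ 2
      = cexp (π * I * τ / 2) * (theta3 τ (τ / 2) * theta3 τ (τ / 2)) := by
        rw [theta2_eq_exp_mul_theta3, zero_add, mul_pow, ← Complex.exp_nat_mul, sq (theta3 _ _)]
        ring_nf
    _ = cexp (π * I * τ / 2) *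
          (theta3 (2 * τ) τ * thetaEven τ + theta2 (2 * τ) τ * thetaOdd τ) := by
        rw [theta3_mul_theta3 hτ, add_halves, sub_self, thetaEven, thetaOdd]
    _ = 2 * (thetaEven τ * thetaOdd τ) := by
        linear_combination (-thetaEven τ) * hO - thetaOdd τ * hE

lemma theta3_half_zero {τ : ℂ} (hτ : 0 < τ.im) :
    theta3 (τ / 2) 0 = thetaEven τ + thetaOdd τ := by
  rw [theta3_eq_theta3_add_theta2 (by simpa using hτ), mul_zero, thetaEven, thetaOdd]
  ring_nf

lemma theta4_half {τ : ℂ} (hτ : 0 < τ.im) : theta4 (τ / 2) = thetaEven τ - thetaOdd τ := by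
  rw [theta4_eq_theta3, theta3_eq_theta3_add_theta2 (by simpa using hτ),
    mul_one_div_cancel two_ne_zero, ← zero_add (1 : ℂ), theta3_add_one, theta2_add_one, thetaEven,
    thetaOdd]
  ring_nf

/-- The factor `√(-iτ/2)`, with the principal branch of the square root, by which the theta
constants of index one transform under `τ ↦ -1/τ`. -/
def thetaFactor (τ : ℂ) : ℂ := (-I * (τ / 2)) ^ (1 / 2 : ℂ)

lemma thetaFactor_sq (τ : ℂ) : thetaFactor τ ^ 2 = -I * τ / 2 := by
  rw [thetaFactor, ← cpow_nat_mul, Nat.cast_ofNat, mul_one_div_cancel two_ne_zero, cpow_one]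
  ring

lemma thetaFactor_pow_six (τ : ℂ) : thetaFactor τ ^ 6 = I * τ ^ 3 / 8 := by
  rw [pow_mul _ 2 3, thetaFactor_sq, div_pow, mul_pow, neg_pow, I_pow_three]
  ring

lemma thetaFactor_ne_zero {τ : ℂ} (hτ : 0 < τ.im) : thetaFactor τ ≠ 0 := by
  simp [thetaFactor, cpow_eq_zero_iff, ne_zero_of_im_pos hτ]

lemma differentiableAt_thetaFactor {τ : ℂ} (hτ : 0 < τ.im) :
    DifferentiableAt ℂ thetaFactor τ := by
  refine DifferentiableAt.cpow (by fun_prop) (by fun_prop) (.inl ?_)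
  simpa using hτ

lemma thetaEven_neg_one_div {τ : ℂ} (hτ : 0 < τ.im) :
    thetaEven (-1 / τ) = thetaFactor τ * (thetaEven τ + thetaOdd τ) := by
  have h := jacobiTheta₂_functional_equation 0 (τ / 2)
  have hτ0 := ne_zero_of_im_pos hτ
  rw [← thetaFactor, ← theta3_eq_jacobiTheta₂, zero_div, ← theta3_eq_jacobiTheta₂,
    theta3_half_zero hτ, show -1 / (τ / 2) = 2 * (-1 / τ) by field_simp, ← thetaEven] at h
  rw [h]
  field_simp [thetaFactor_ne_zero hτ]
  simp

lemma thetaOdd_neg_one_div {τ : ℂ} (hτ : 0 < τ.im) :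
    thetaOdd (-1 / τ) = thetaFactor τ * (thetaEven τ - thetaOdd τ) := by
  have h := jacobiTheta₂_functional_equation (1 / 2) (τ / 2)
  have hτ0 := ne_zero_of_im_pos hτ
  rw [← thetaFactor, ← theta3_eq_jacobiTheta₂, ← theta4_eq_theta3, theta4_half hτ,
    show -1 / (τ / 2) = 2 * (-1 / τ) by field_simp,
    show (1 / 2 : ℂ) / (τ / 2) = -(0 + 2 * (-1 / τ) / 2) by field_simp; norm_num,
    jacobiTheta₂_neg_left, ← theta3_eq_jacobiTheta₂,
    show -π * I * (1 / 2) ^ 2 / (τ / 2) = π * I * (2 * (-1 / τ)) / 4 + π * I * 0 by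
      field_simp; norm_num, mul_assoc, ← theta2_eq_exp_mul_theta3, ← thetaOdd] at h
  rw [h]
  field_simp [thetaFactor_ne_zero hτ]

end ThetaConstants

section QSeries

/-- The `q`-series `∑ q ^ e i` with exponents `e`. -/
def qSeries {ι : Type*} (e : ι → ℕ) (q : ℂ) : ℂ := ∑' i, q ^ e i

lemma differentiableOn_qSeries {ι : Type*} {e : ι → ℕ}
    (he : ∀ r : ℝ, 0 < r → r < 1 → Summable fun i ↦ r ^ e i) :
    DifferentiableOn ℂ (qSeries e) (Metric.ball 0 1) := by
  intro q hq
  obtain ⟨r, hqr, hr⟩ := exists_between (mem_ball_zero_iff.mp hq)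
  have hdiff : DifferentiableOn ℂ (qSeries e) (Metric.ball 0 r) := by
    refine differentiableOn_tsum_of_summable_norm (he r ((norm_nonneg q).trans_lt hqr) hr)
      (fun i ↦ by fun_prop) Metric.isOpen_ball fun i w hw ↦ ?_
    rw [norm_pow]
    exact pow_le_pow_left₀ (norm_nonneg w) (mem_ball_zero_iff.mp hw).le _
  have hmem : Metric.ball 0 r ∈ 𝓝 q := Metric.isOpen_ball.mem_nhds (mem_ball_zero_iff.mpr hqr)
  exact (hdiff.differentiableAt hmem).differentiableWithinAt

lemma qSeries_zero {ι : Type*} {e : ι → ℕ} {s : Finset ι} (hs : ∀ i, e i = 0 ↔ i ∈ s) :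
    qSeries e 0 = s.card := by
  have hterm (i : ι) (hi : i ∉ s) : (0 : ℂ) ^ e i = 0 := zero_pow (mt (hs i).mp hi)
  rw [qSeries, tsum_eq_sum hterm, Finset.sum_congr rfl fun i hi ↦ by rw [(hs i).mpr hi, pow_zero],
    Finset.sum_const, nsmul_one]

lemma summable_pow_of_natAbs_le {e : ℤ → ℕ} {C : ℕ} (he : ∀ n, n.natAbs ≤ e n + C) {r : ℝ}
    (hr : 0 < r) (hr1 : r < 1) : Summable fun n ↦ r ^ e n := by
  have hgeom : Summable fun n : ℤ ↦ r ^ n.natAbs := by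
    apply Summable.of_nat_of_neg <;> simpa using summable_geometric_of_lt_one hr.le hr1
  refine (hgeom.mul_left (r ^ C)⁻¹).of_nonneg_of_le (fun n ↦ by positivity) fun n ↦ ?_
  rw [inv_mul_eq_div, le_div_iff₀ (by positivity), ← pow_add]
  exact pow_le_pow_of_le_one hr.le hr1.le (he n)

/-- The exponents of the `q`-expansion of `thetaEven`. -/
def evenExponent (n : ℤ) : ℕ := n.natAbs ^ 2

/-- The exponents `(r² - 1)/4`, `r = 2n + 1`, of the `q`-expansion of `q^(-1/4) * thetaOdd`. -/
def oddExponent (n : ℤ) : ℕ := (n * (n + 1)).natAbs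

lemma cast_evenExponent (n : ℤ) : (evenExponent n : ℂ) = n ^ 2 := by
  have h : (evenExponent n : ℤ) = n ^ 2 := by simp [evenExponent]
  exact_mod_cast congrArg (Int.cast : ℤ → ℂ) h

lemma cast_oddExponent (n : ℤ) : (oddExponent n : ℂ) = n * (n + 1) := by
  have hnonneg : 0 ≤ n * (n + 1) := by
    rcases le_or_gt 0 n with hn | hn
    · positivity
    · exact mul_nonneg_of_nonpos_of_nonpos hn.le hn
  have h : (oddExponent n : ℤ) = n * (n + 1) := Int.natAbs_of_nonneg hnonneg
  exact_mod_cast congrArg (Int.cast : ℤ → ℂ) h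

lemma differentiableOn_qSeries_evenExponent :
    DifferentiableOn ℂ (qSeries evenExponent) (Metric.ball 0 1) :=
  differentiableOn_qSeries fun _ ↦ summable_pow_of_natAbs_le (C := 0) fun _ ↦
    Nat.le_self_pow two_ne_zero _

lemma differentiableOn_qSeries_oddExponent :
    DifferentiableOn ℂ (qSeries oddExponent) (Metric.ball 0 1) := by
  refine differentiableOn_qSeries fun _ ↦ summable_pow_of_natAbs_le (C := 1) fun n ↦ ?_
  rw [oddExponent, Int.natAbs_mul]
  rcases (n + 1).natAbs.eq_zero_or_pos with hn | hn
  · omega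
  · exact (Nat.le_mul_of_pos_right _ hn).trans (Nat.le_succ _)

lemma qSeries_evenExponent_zero : qSeries evenExponent 0 = 1 := by
  simpa using qSeries_zero (e := evenExponent) (s := {0}) (by simp [evenExponent])

lemma qSeries_oddExponent_zero : qSeries oddExponent 0 = 2 := by
  have h (n : ℤ) : oddExponent n = 0 ↔ n ∈ ({0, -1} : Finset ℤ) := by
    simp [oddExponent, add_eq_zero_iff_eq_neg]
  simpa using qSeries_zero h

lemma thetaEven_eq_qSeries (τ : ℂ) : thetaEven τ = qSeries evenExponent (𝕢 1 τ) := by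
  refine tsum_congr fun n ↦ ?_
  rw [Periodic.qParam, ← Complex.exp_nat_mul, cast_evenExponent]
  push_cast
  ring_nf

lemma thetaOdd_eq_qParam_mul_qSeries (τ : ℂ) :
    thetaOdd τ = 𝕢 4 τ * qSeries oddExponent (𝕢 1 τ) := by
  rw [thetaOdd, theta2, qSeries, ← tsum_mul_left]
  refine tsum_congr fun n ↦ ?_
  rw [Periodic.qParam, Periodic.qParam, ← Complex.exp_nat_mul, ← Complex.exp_add,
    cast_oddExponent]
  push_cast
  ring_nf

lemma differentiableAt_comp_qParam {f : ℂ → ℂ} (hf : DifferentiableOn ℂ f (Metric.ball 0 1))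
    {τ : ℂ} (hτ : 0 < τ.im) : DifferentiableAt ℂ f (𝕢 1 τ) :=
  hf.differentiableAt (Metric.isOpen_ball.mem_nhds (qParam_mem_ball one_pos hτ))

lemma differentiableAt_thetaEven {τ : ℂ} (hτ : 0 < τ.im) : DifferentiableAt ℂ thetaEven τ := by
  rw [funext thetaEven_eq_qSeries]
  exact (differentiableAt_comp_qParam differentiableOn_qSeries_evenExponent hτ).comp τ
    Periodic.differentiable_qParam.differentiableAt

lemma differentiableAt_thetaOdd {τ : ℂ} (hτ : 0 < τ.im) : DifferentiableAt ℂ thetaOdd τ := by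
  rw [funext thetaOdd_eq_qParam_mul_qSeries]
  exact Periodic.differentiable_qParam.differentiableAt.mul
    ((differentiableAt_comp_qParam differentiableOn_qSeries_oddExponent hτ).comp τ
      Periodic.differentiable_qParam.differentiableAt)

end QSeries

section Wronskian

variable {𝕜 : Type*} [NontriviallyNormedField 𝕜] {f g f₁ g₁ φ c : 𝕜 → 𝕜} {x : 𝕜}

/-- The Wronskian `f g' - f' g` of two functions. -/
def wronskian (f g : 𝕜 → 𝕜) (x : 𝕜) : 𝕜 := f x * deriv g x - deriv f x * g x

lemma wronskian_congr (hf : f =ᶠ[𝓝 x] f₁) (hg : g =ᶠ[𝓝 x] g₁) :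
    wronskian f g x = wronskian f₁ g₁ x := by
  rw [wronskian, wronskian, hf.deriv_eq, hg.deriv_eq, hf.eq_of_nhds, hg.eq_of_nhds]

lemma wronskian_comp (hf : DifferentiableAt 𝕜 f (φ x)) (hg : DifferentiableAt 𝕜 g (φ x))
    (hφ : DifferentiableAt 𝕜 φ x) :
    wronskian (f ∘ φ) (g ∘ φ) x = deriv φ x * wronskian f g (φ x) := by
  simp only [wronskian, deriv_comp x hf hφ, deriv_comp x hg hφ, comp_apply]
  ring

lemma wronskian_mul_left (hc : DifferentiableAt 𝕜 c x) (hf : DifferentiableAt 𝕜 f x)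
    (hg : DifferentiableAt 𝕜 g x) :
    wronskian (c * f) (c * g) x = c x ^ 2 * wronskian f g x := by
  simp only [wronskian, deriv_mul hc hf, deriv_mul hc hg, Pi.mul_apply]
  ring

lemma wronskian_add_sub (hf : DifferentiableAt 𝕜 f x) (hg : DifferentiableAt 𝕜 g x) :
    wronskian (f + g) (f - g) x = -2 * wronskian f g x := by
  simp only [wronskian, deriv_add hf hg, deriv_sub hf hg, Pi.add_apply, Pi.sub_apply]
  ring

end Wronskian

section Weight3

lemma hasDerivAt_qParam (h : ℝ) (τ : ℂ) : HasDerivAt (𝕢 h) (2 * π * I / h * 𝕢 h τ) τ := by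
  have hlin : HasDerivAt (fun t : ℂ ↦ 2 * π * I * t / h) (2 * π * I / h) τ := by
    simpa using ((hasDerivAt_id τ).const_mul (2 * π * I)).div_const (h : ℂ)
  exact hlin.cexp.congr_deriv (mul_comm _ _)

lemma wronskian_comp_qParam (h : ℝ) {f g : ℂ → ℂ} {τ : ℂ} (hf : DifferentiableAt ℂ f (𝕢 1 τ))
    (hg : DifferentiableAt ℂ g (𝕢 1 τ)) :
    wronskian (fun t ↦ f (𝕢 1 t)) (fun t ↦ 𝕢 h t * g (𝕢 1 t)) τ =
      𝕢 h τ * (2 * π * I * (f (𝕢 1 τ) * g (𝕢 1 τ) / h + 𝕢 1 τ * wronskian f g (𝕢 1 τ))) := by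
  have hfq := hf.hasDerivAt.comp τ (hasDerivAt_qParam 1 τ)
  have hgq := (hasDerivAt_qParam h τ).mul (hg.hasDerivAt.comp τ (hasDerivAt_qParam 1 τ))
  have hfq' : deriv (fun t ↦ f (𝕢 1 t)) τ = _ := hfq.deriv
  have hgq' : deriv (fun t ↦ 𝕢 h t * g (𝕢 1 t)) τ = _ := hgq.deriv
  simp only [wronskian, hfq', hgq', comp_apply, ofReal_one, div_one]
  ring

lemma qParam_pow (h : ℝ) (τ : ℂ) (n : ℕ) : 𝕢 h τ ^ n = 𝕢 (h / n) τ := by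
  rw [Periodic.qParam, Periodic.qParam, ← Complex.exp_nat_mul]
  push_cast
  rw [div_div_eq_mul_div, mul_div_assoc', mul_comm]

lemma eq_const_mul_eta_pow_six {f g : ℂ → ℂ} (hg : DifferentiableOn ℂ g (Metric.ball 0 1))
    (hfg : ∀ τ : ℂ, 0 < τ.im → f τ = 𝕢 4 τ * g (𝕢 1 τ))
    (hS : ∀ τ : ℂ, 0 < τ.im → f (-1 / τ) = I * τ ^ 3 * f τ) {τ : ℂ} (hτ : 0 < τ.im) :
    f τ = g 0 * eta τ ^ 6 := by
  refine eq_const_mul_eta_pow hg (fun t ht ↦ ?_) (fun t ht ↦ ?_) hτ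
  · rw [hfg t ht, qParam_pow]
    norm_num
  · rw [hS t ht, eta_neg_one_div_pow_six ht]
    ring

lemma thetaEven_pow_five_mul_thetaOdd_sub {τ : ℂ} (hτ : 0 < τ.im) :
    thetaEven τ ^ 5 * thetaOdd τ - thetaEven τ * thetaOdd τ ^ 5 = 2 * eta τ ^ 6 := by
  let g : ℂ → ℂ := fun q ↦ qSeries evenExponent q ^ 5 * qSeries oddExponent q -
    q * (qSeries evenExponent q * qSeries oddExponent q ^ 5)
  have hE := differentiableOn_qSeries_evenExponent
  have hO := differentiableOn_qSeries_oddExponent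
  have hg : DifferentiableOn ℂ g (Metric.ball 0 1) :=
    ((hE.pow 5).mul hO).sub (differentiableOn_id.mul (hE.mul (hO.pow 5)))
  have hg0 : g 0 = 2 := by
    simp [g, qSeries_evenExponent_zero, qSeries_oddExponent_zero]
  rw [← hg0]
  refine eq_const_mul_eta_pow_six (f := fun t ↦ thetaEven t ^ 5 * thetaOdd t -
    thetaEven t * thetaOdd t ^ 5) hg (fun t _ ↦ ?_) (fun t ht ↦ ?_) hτ
  · have hq : 𝕢 1 t = 𝕢 4 t ^ 4 := by simp [qParam_pow]
    simp only [g, thetaEven_eq_qSeries, thetaOdd_eq_qParam_mul_qSeries, hq]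
    ring
  · simp only [thetaEven_neg_one_div ht, thetaOdd_neg_one_div ht]
    linear_combination 8 * (thetaEven t ^ 5 * thetaOdd t - thetaEven t * thetaOdd t ^ 5) *
      thetaFactor_pow_six t

lemma wronskian_theta_neg_one_div {τ : ℂ} (hτ : 0 < τ.im) :
    wronskian thetaEven thetaOdd (-1 / τ) = I * τ ^ 3 * wronskian thetaEven thetaOdd τ := by
  have hτ0 := ne_zero_of_im_pos hτ
  have hE := differentiableAt_thetaEven hτ
  have hO := differentiableAt_thetaOdd hτ
  have hS : HasDerivAt (fun t : ℂ ↦ -1 / t) (1 / τ ^ 2) τ := by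
    simpa [neg_div] using (hasDerivAt_inv hτ0).fun_neg
  have hτS := im_neg_one_div_pos hτ
  have hcomp := wronskian_comp (φ := fun t : ℂ ↦ -1 / t) (differentiableAt_thetaEven hτS)
    (differentiableAt_thetaOdd hτS) hS.differentiableAt
  have htrans : wronskian (thetaEven ∘ fun t ↦ -1 / t) (thetaOdd ∘ fun t ↦ -1 / t) τ =
      wronskian (thetaFactor * (thetaEven + thetaOdd)) (thetaFactor * (thetaEven - thetaOdd)) τ :=
    wronskian_congr ((eventually_im_pos hτ).mono fun _ ↦ thetaEven_neg_one_div)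
      ((eventually_im_pos hτ).mono fun _ ↦ thetaOdd_neg_one_div)
  rw [wronskian_mul_left (differentiableAt_thetaFactor hτ) (hE.add hO) (hE.sub hO),
    wronskian_add_sub hE hO, thetaFactor_sq, hcomp, hS.deriv] at htrans
  rw [← mul_right_inj' (one_div_ne_zero (pow_ne_zero 2 hτ0)), htrans]
  field_simp

lemma wronskian_thetaEven_thetaOdd {τ : ℂ} (hτ : 0 < τ.im) :
    wronskian thetaEven thetaOdd τ = π * I * eta τ ^ 6 := by
  let g : ℂ → ℂ := fun q ↦ 2 * π * I * (qSeries evenExponent q * qSeries oddExponent q / (4 : ℝ) +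
    q * wronskian (qSeries evenExponent) (qSeries oddExponent) q)
  have hE := differentiableOn_qSeries_evenExponent
  have hO := differentiableOn_qSeries_oddExponent
  have hE' := hE.deriv Metric.isOpen_ball
  have hO' := hO.deriv Metric.isOpen_ball
  have hg : DifferentiableOn ℂ g (Metric.ball 0 1) :=
    (((hE.mul hO).div_const _).add
      (differentiableOn_id.mul ((hE.mul hO').sub (hE'.mul hO)))).const_mul _
  have hg0 : g 0 = π * I := by
    simp only [g, qSeries_evenExponent_zero, qSeries_oddExponent_zero]
    push_cast
    ring
  rw [← hg0]
  refine eq_const_mul_eta_pow_six hg (fun t ht ↦ ?_) (fun t ↦ wronskian_theta_neg_one_div) hτ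
  rw [funext thetaEven_eq_qSeries, funext thetaOdd_eq_qParam_mul_qSeries]
  exact wronskian_comp_qParam 4 (differentiableAt_comp_qParam hE ht)
    (differentiableAt_comp_qParam hO ht)

end Weight3

section Derivatives

lemma deriv_theta_relation {τ : ℂ} (hτ : 0 < τ.im) :
    (5 * thetaEven τ ^ 4 * thetaOdd τ - thetaOdd τ ^ 5) * deriv thetaEven τ +
      (thetaEven τ ^ 5 - 5 * thetaEven τ * thetaOdd τ ^ 4) * deriv thetaOdd τ =
      π * I * E2 τ * eta τ ^ 6 := by
  have hE := (differentiableAt_thetaEven hτ).hasDerivAt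
  have hO := (differentiableAt_thetaOdd hτ).hasDerivAt
  have hlhs := ((hE.fun_pow 5).fun_mul hO).fun_sub (hE.fun_mul (hO.fun_pow 5))
  have hrhs := ((hasDerivAt_eta hτ).fun_pow 6).const_mul 2
  have heq : (fun t ↦ thetaEven t ^ 5 * thetaOdd t - thetaEven t * thetaOdd t ^ 5) =ᶠ[𝓝 τ]
      fun t ↦ 2 * eta t ^ 6 :=
    (eventually_im_pos hτ).mono fun _ ↦ thetaEven_pow_five_mul_thetaOdd_sub
  have h := hlhs.unique (hrhs.congr_of_eventuallyEq heq)
  push_cast at h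
  linear_combination h

lemma hasDerivAt_thetaEven {τ : ℂ} (hτ : 0 < τ.im) :
    HasDerivAt thetaEven
      (π * I / 12 * (E2 τ + (5 * thetaOdd τ ^ 4 - thetaEven τ ^ 4)) * thetaEven τ) τ := by
  have hW := wronskian_thetaEven_thetaOdd hτ
  rw [wronskian] at hW
  refine (differentiableAt_thetaEven hτ).hasDerivAt.congr_deriv ?_
  refine mul_left_cancel₀ (mul_ne_zero (by norm_num : (12 : ℂ) ≠ 0)
    (pow_ne_zero 6 (eta_ne_zero hτ))) ?_
  linear_combination thetaEven τ * deriv_theta_relation hτ -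
    (thetaEven τ ^ 5 - 5 * thetaEven τ * thetaOdd τ ^ 4) * hW -
    6 * deriv thetaEven τ * thetaEven_pow_five_mul_thetaOdd_sub hτ

lemma hasDerivAt_thetaOdd {τ : ℂ} (hτ : 0 < τ.im) :
    HasDerivAt thetaOdd
      (π * I / 12 * (E2 τ + (5 * thetaEven τ ^ 4 - thetaOdd τ ^ 4)) * thetaOdd τ) τ := by
  have hW := wronskian_thetaEven_thetaOdd hτ
  rw [wronskian] at hW
  refine (differentiableAt_thetaOdd hτ).hasDerivAt.congr_deriv ?_
  refine mul_left_cancel₀ (mul_ne_zero (by norm_num : (12 : ℂ) ≠ 0)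
    (pow_ne_zero 6 (eta_ne_zero hτ))) ?_
  linear_combination thetaOdd τ * deriv_theta_relation hτ +
    (5 * thetaEven τ ^ 4 * thetaOdd τ - thetaOdd τ ^ 5) * hW -
    6 * deriv thetaOdd τ * thetaEven_pow_five_mul_thetaOdd_sub hτ

lemma Dtau_div_eta_pow_six {f : ℂ → ℂ} {φ τ : ℂ} (hτ : 0 < τ.im)
    (hf : HasDerivAt f (π * I / 12 * (E2 τ + φ) * f τ) τ) :
    Dtau (fun t ↦ f t / eta t ^ 6) τ = 5 / 12 * E2hat τ * (f τ / eta τ ^ 6) -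
      φ / 12 * (f τ / eta τ ^ 6) := by
  have hη := eta_ne_zero hτ
  have hquot : deriv (fun t ↦ f t / eta t ^ 6) τ =
      π * I / 12 * (φ - 5 * E2 τ) * (f τ / eta τ ^ 6) := by
    rw [(hf.fun_div ((hasDerivAt_eta hτ).fun_pow 6) (pow_ne_zero 6 hη)).deriv]
    field_simp
    ring
  have hpi : (π : ℂ) ≠ 0 := ofReal_ne_zero.mpr Real.pi_ne_zero
  have him : (τ.im : ℂ) ≠ 0 := ofReal_ne_zero.mpr hτ.ne'
  rw [Dtau, hquot, E2hat]
  field_simp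
  linear_combination 4 * ((φ - 5 * E2 τ) * π * τ.im + 15) * f τ * I_sq

lemma theta3_zero_sq_ne_zero {τ : ℂ} (hτ : 0 < τ.im) : theta3 τ 0 ^ 2 ≠ 0 := by
  intro h
  rw [theta3_zero_sq hτ] at h
  refine pow_ne_zero 6 (eta_ne_zero hτ) ?_
  linear_combination (-1 / 2) * thetaEven_pow_five_mul_thetaOdd_sub hτ +
    (1 / 2) * thetaEven τ * thetaOdd τ * (thetaEven τ ^ 2 - thetaOdd τ ^ 2) * h

lemma one_div_theta3_zero_sq {τ : ℂ} (hτ : 0 < τ.im) :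
    1 / theta3 τ 0 ^ 2 =
      thetaEven τ * thetaOdd τ * (thetaEven τ ^ 2 - thetaOdd τ ^ 2) / (2 * eta τ ^ 6) := by
  rw [div_eq_div_iff (theta3_zero_sq_ne_zero hτ)
    (mul_ne_zero two_ne_zero (pow_ne_zero 6 (eta_ne_zero hτ))), theta3_zero_sq hτ]
  linear_combination -thetaEven_pow_five_mul_thetaOdd_sub hτ

lemma theta4_pow_four_sub_theta2_pow_four {τ : ℂ} (hτ : 0 < τ.im) :
    theta4 τ ^ 4 - theta2 τ 0 ^ 4 =
      thetaEven τ ^ 4 - 6 * thetaEven τ ^ 2 * thetaOdd τ ^ 2 + thetaOdd τ ^ 4 := by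
  rw [pow_mul (theta4 τ) 2 2, pow_mul (theta2 τ 0) 2 2, theta4_sq hτ, theta2_zero_sq hτ]
  ring

lemma h0_eq_mul_htilde0 {τ : ℂ} (hτ : 0 < τ.im) :
    h0 τ = 2 * (5 * thetaEven τ ^ 4 - thetaOdd τ ^ 4) * htilde0 τ := by
  rw [h0, htilde0, ← thetaEven, ← thetaOdd, theta4_pow_four_sub_theta2_pow_four hτ,
    div_eq_mul_one_div _ (theta3 τ 0 ^ 2), one_div_theta3_zero_sq hτ]
  have hη := eta_ne_zero hτ
  field_simp
  ring

lemma h1_eq_mul_htilde1 {τ : ℂ} (hτ : 0 < τ.im) :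
    h1 τ = 2 * (5 * thetaOdd τ ^ 4 - thetaEven τ ^ 4) * htilde1 τ := by
  rw [h1, htilde1, ← thetaEven, ← thetaOdd, theta4_pow_four_sub_theta2_pow_four hτ,
    div_eq_mul_one_div _ (theta3 τ 0 ^ 2), one_div_theta3_zero_sq hτ]
  have hη := eta_ne_zero hτ
  field_simp
  ring

end Derivatives

theorem Dtau_htilde (τ : ℂ) (hτ : 0 < τ.im) :
    Dtau htilde0 τ = 5/12 * E2hat τ * htilde0 τ - 1/24 * h0 τ ∧
    Dtau htilde1 τ = 5/12 * E2hat τ * htilde1 τ - 1/24 * h1 τ := by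
  have hD0 : Dtau htilde0 τ = 5 / 12 * E2hat τ * htilde0 τ -
      (5 * thetaEven τ ^ 4 - thetaOdd τ ^ 4) / 12 * htilde0 τ :=
    Dtau_div_eta_pow_six hτ (hasDerivAt_thetaOdd hτ)
  have hD1 : Dtau htilde1 τ = 5 / 12 * E2hat τ * htilde1 τ -
      (5 * thetaOdd τ ^ 4 - thetaEven τ ^ 4) / 12 * htilde1 τ :=
    Dtau_div_eta_pow_six (f := -thetaEven) hτ
      ((hasDerivAt_thetaEven hτ).neg.congr_deriv (mul_neg _ _).symm)
  rw [hD0, hD1, h0_eq_mul_htilde0 hτ, h1_eq_mul_htilde1 hτ]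
  constructor <;> ring

end KZ
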